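/- (q-reflection formula) For every rational number α that is not an integer, every coefficient of the Laurent series Γ_q(α)·Γ_q(1−α) ∈ ℚ((q)) is an integer; that is, Γ_q(α)·Γ_q(1−α) ∈ ℤ((q)). -/

import Mathlib

/-!
The point is that everything in sight already has integer coefficients, except for the two
factors `T`, whose product is an integral power of `1 - q`.

* For a non-integer rational `β`, `[β]_q` expands to `±q^n (1 + ⋯)` with integer coefficients, so
  `[β]_q` is a unit of `ℤ((q))` (`lau_qRat_isIntUnit`). This is read off from the `q`-deformed
  continued fraction: an induction on its length (`qCF_expansion`) shows that from any odd position
  on it is a power series with constant coefficient `1`, and from any even position on it is such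
  a series divided by a power of `q`.
* `[k]_q` is a power series with constant coefficient `1`, so the `q`-binomial coefficients
  `binom(β-1,k)_q`, hence the coefficients of `S_β`, are integers (`coeff_mem_of_isGammaSum`).
  The divisors `[β]_q` used to continue `Γ_q` below `1` are units of `ℤ((q))`.
* `T_β = (1-q)^{-(β-1)}`, and the two shifted arguments `β₁`, `β₂` differ from `α` and `1-α` by
  integers. So `(β₁-1)+(β₂-1)` is an integer, and `T_{β₁} T_{β₂}` has integer coefficients
  (`Tser_mul_Tser_mem`), by the addition law for binomial series.
-/

noncomputable section

open Finset

/-- The `q`-integer `[n]_q = 1 + q + ⋯ + q^{n-1}` as a rational function in `q`. -/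
def qNum (n : ℕ) : RatFunc ℚ := ∑ i ∈ Finset.range n, RatFunc.X ^ i

/-- The `q⁻¹`-integer `[n]_{q⁻¹} = 1 + q⁻¹ + ⋯ + q^{-(n-1)}`. -/
def qNumInv (n : ℕ) : RatFunc ℚ := ∑ i ∈ Finset.range n, (RatFunc.X)⁻¹ ^ i

/-- The continued fraction expansion of `p/q` computed by the Euclidean algorithm. -/
def cfNat (p q : ℕ) : List ℕ :=
  if h : q = 0 then [] else (p / q) :: cfNat q (p % q)
termination_by q
decreasing_by exact Nat.mod_lt _ (Nat.pos_of_ne_zero h)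

/-- Turn a continued fraction expansion into one of even length,
replacing a final coefficient `aₙ` by `aₙ - 1, 1` if needed. -/
def evenize (l : List ℕ) : List ℕ :=
  if l.length % 2 = 0 then l else l.dropLast ++ [l.getLast! - 1, 1]

/-- Evaluation of the Morier-Genoud--Ovsienko `q`-deformed continued fraction
`[a₁]_q + q^{a₁}/([a₂]_{q⁻¹} + q^{-a₂}/([a₃]_q + ⋯ + q^{a_{2m-1}}/[a_{2m}]_{q⁻¹}))`.
The boolean records whether the current position is odd (`true`) or even (`false`).
(The empty continued fraction is sent to `0`; since division by zero yields `0`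
in `RatFunc ℚ`, a final term `[a]_{q⁻¹} + q^{-a}/0⁻ = [a]_{q⁻¹}` comes out correctly.) -/
def qCF : Bool → List ℕ → RatFunc ℚ
  | _, [] => 0
  | true, a :: l => qNum a + RatFunc.X ^ a / qCF false l
  | false, a :: l => qNumInv a + (RatFunc.X)⁻¹ ^ a / qCF true l

/-- The Morier-Genoud--Ovsienko `q`-rational of `α > 1`, via the even-length
continued fraction expansion of `α`. -/
def qRatCF (α : ℚ) : RatFunc ℚ := qCF true (evenize (cfNat α.num.toNat α.den))

/-- The Morier-Genoud--Ovsienko `q`-rational `[α]_q ∈ ℚ(q)`, for all `α ∈ ℚ`: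
for `α > 1` it is given by the `q`-deformed continued fraction, and it is
extended to all of `ℚ` by the rule `[α-1]_q = ([α]_q - 1)/q`. -/
def qRat (α : ℚ) : RatFunc ℚ :=
  if 1 < α then qRatCF α
  else (qRatCF (α + (2 - ⌊α⌋).toNat) - qNum (2 - ⌊α⌋).toNat) / RatFunc.X ^ (2 - ⌊α⌋).toNat

/-- `{α}_q := [α+1]_q - [α]_q`, the substitute for `q^α`. -/
def qPow (α : ℚ) : RatFunc ℚ := qRat (α + 1) - qRat α

/-- The `q`-factorial `[k]_q!`. -/
def qFact (k : ℕ) : RatFunc ℚ := ∏ i ∈ Finset.range k, qNum (i + 1)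

/-- The `q`-binomial coefficient `binom(α,k)_q = [α]_q [α-1]_q ⋯ [α-k+1]_q / [k]_q!`. -/
def qBinom (α : ℚ) (k : ℕ) : RatFunc ℚ :=
  (∏ i ∈ Finset.range k, qRat (α - i)) / qFact k

/-- The Laurent-series expansion (at `q = 0`) of a rational function. -/
def lau (f : RatFunc ℚ) : LaurentSeries ℚ := ↑f


/-- The element `q` of the field of Laurent series `ℚ((q))`. -/
def qL : LaurentSeries ℚ := HahnSeries.single 1 1

/-- The `k`-th term `(-1)^k·q^{k(k+1)/2}·binom(α-1,k)_q` of the series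
`B_{α-1}(q,-q)` defining the `q`-Gamma function. -/
def gammaTerm (α : ℚ) (k : ℕ) : LaurentSeries ℚ :=
  (-1 : LaurentSeries ℚ) ^ k * qL ^ (k * (k + 1) / 2) * lau (qBinom (α - 1) k)

/-- The ordinary generalized binomial coefficient `C(α+n-2,n)
  = (α-1)·α·(α+1)⋯(α+n-2)/n!`. -/
def genBinom (α : ℚ) (n : ℕ) : ℚ := (∏ i ∈ Finset.range n, (α - 1 + i)) / n.factorial

/-- `T_α = 1/(1-q)^{α-1} := Σ_{n≥0} C(α+n-2,n)·qⁿ`, as a Laurent series. -/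
def Tser (α : ℚ) : LaurentSeries ℚ :=
  HahnSeries.ofPowerSeries ℤ ℚ (PowerSeries.mk fun n => genBinom α n)

/-- `S` is the sum `S_α = Σ_{k≥0} (-1)^k·q^{k(k+1)/2}·binom(α-1,k)_q = B_{α-1}(q,-q)`,
in the sense that each `q`-coefficient of the partial sums stabilizes to that of `S`. -/
def IsGammaSum (α : ℚ) (S : LaurentSeries ℚ) : Prop :=
  ∀ m : ℤ, ∃ K₀ : ℕ, ∀ K ≥ K₀,
    (∑ k ∈ Finset.range K, gammaTerm α k).coeff m = S.coeff m

/-! ### Laurent series with integer coefficients -/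

/-- The subring `ℤ((q))` of `ℚ((q))`: the Laurent series all of whose coefficients are integers. -/
def intLaurent : Subring (LaurentSeries ℚ) where
  carrier := {f | ∀ m : ℤ, f.coeff m ∈ (Int.castRingHom ℚ).range}
  mul_mem' := by
    intro a b ha hb m
    rw [HahnSeries.coeff_mul]
    exact Subring.sum_mem _ fun ij _ => Subring.mul_mem _ (ha _) (hb _)
  one_mem' := by
    intro m
    rw [HahnSeries.coeff_one]
    split_ifs
    · exact Subring.one_mem _
    · exact Subring.zero_mem _
  add_mem' := by
    intro a b ha hb m
    rw [HahnSeries.coeff_add]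
    exact Subring.add_mem _ (ha m) (hb m)
  zero_mem' := by
    intro m
    rw [HahnSeries.coeff_zero]
    exact Subring.zero_mem _
  neg_mem' := by
    intro a ha m
    rw [HahnSeries.coeff_neg]
    exact Subring.neg_mem _ (ha m)

/-- The embedding `ℤ[[q]] → ℚ((q))`. -/
def intSeries : PowerSeries ℤ →+* LaurentSeries ℚ :=
  (HahnSeries.ofPowerSeries ℤ ℚ).comp (PowerSeries.map (Int.castRingHom ℚ))

lemma ofPowerSeries_mem {f : PowerSeries ℚ}
    (hf : ∀ n, PowerSeries.coeff n f ∈ (Int.castRingHom ℚ).range) :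
    HahnSeries.ofPowerSeries ℤ ℚ f ∈ intLaurent := by
  intro m
  rw [PowerSeries.coeff_coe]
  split_ifs
  · exact Subring.zero_mem _
  · exact hf _

lemma intSeries_mem (u : PowerSeries ℤ) : intSeries u ∈ intLaurent :=
  ofPowerSeries_mem fun n => by
    rw [PowerSeries.coeff_map]
    exact ⟨_, rfl⟩

lemma intSeries_X : intSeries PowerSeries.X = qL := by
  simp [intSeries, qL]

lemma qL_ne_zero : qL ≠ 0 := by
  simp [qL]

lemma exists_intSeries_inv {u : PowerSeries ℤ} (hu : PowerSeries.constantCoeff u = 1) :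
    ∃ v : PowerSeries ℤ, PowerSeries.constantCoeff v = 1 ∧ (intSeries u)⁻¹ = intSeries v := by
  refine ⟨PowerSeries.invOfUnit u 1, by simp, ?_⟩
  refine inv_eq_of_mul_eq_one_right ?_
  rw [← map_mul, PowerSeries.mul_invOfUnit u 1 (by simpa using hu), map_one]

/-- `f` and its inverse in `ℚ((q))` both have integer coefficients; for `f ≠ 0` this says that `f`
is a unit of `ℤ((q))`. -/
def IsIntUnit (f : LaurentSeries ℚ) : Prop := f ∈ intLaurent ∧ f⁻¹ ∈ intLaurent

lemma IsIntUnit.mul {f g : LaurentSeries ℚ} (hf : IsIntUnit f) (hg : IsIntUnit g) :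
    IsIntUnit (f * g) :=
  ⟨Subring.mul_mem _ hf.1 hg.1, by rw [mul_inv]; exact Subring.mul_mem _ hf.2 hg.2⟩

lemma IsIntUnit.neg {f : LaurentSeries ℚ} (hf : IsIntUnit f) : IsIntUnit (-f) := by
  have h1 : (-1 : LaurentSeries ℚ)⁻¹ = -1 := inv_eq_of_mul_eq_one_right (by ring)
  have h : (-1 : LaurentSeries ℚ) ∈ intLaurent := Subring.neg_mem _ (Subring.one_mem _)
  rw [← neg_one_mul]
  exact IsIntUnit.mul ⟨h, by rw [h1]; exact h⟩ hf

lemma IsIntUnit.inv {f : LaurentSeries ℚ} (hf : IsIntUnit f) : IsIntUnit f⁻¹ :=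
  ⟨hf.2, by rw [inv_inv]; exact hf.1⟩

lemma IsIntUnit.one : IsIntUnit 1 :=
  ⟨Subring.one_mem _, by rw [inv_one]; exact Subring.one_mem _⟩

lemma IsIntUnit.prod {ι : Type*} {s : Finset ι} {f : ι → LaurentSeries ℚ}
    (h : ∀ i ∈ s, IsIntUnit (f i)) : IsIntUnit (∏ i ∈ s, f i) :=
  Finset.prod_induction f IsIntUnit (fun _ _ => IsIntUnit.mul) IsIntUnit.one h

lemma isIntUnit_intSeries {u : PowerSeries ℤ} (hu : PowerSeries.constantCoeff u = 1) :
    IsIntUnit (intSeries u) := by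
  obtain ⟨v, -, hv⟩ := exists_intSeries_inv hu
  exact ⟨intSeries_mem u, hv ▸ intSeries_mem v⟩

lemma isIntUnit_qL : IsIntUnit qL := by
  refine ⟨intSeries_X ▸ intSeries_mem _, fun m => ?_⟩
  rw [qL, HahnSeries.inv_single, HahnSeries.coeff_single]
  split_ifs
  · exact ⟨1, by simp⟩
  · exact Subring.zero_mem _

lemma isIntUnit_qL_pow (n : ℕ) : IsIntUnit (qL ^ n) := by
  induction n with
  | zero => rw [pow_zero]; exact IsIntUnit.one
  | succ n ih => rw [pow_succ]; exact ih.mul isIntUnit_qL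

/-! ### Expansion of `q`-integers -/

lemma lau_add (f g : RatFunc ℚ) : lau (f + g) = lau f + lau g := map_add _ f g
lemma lau_sub (f g : RatFunc ℚ) : lau (f - g) = lau f - lau g := map_sub _ f g
lemma lau_mul (f g : RatFunc ℚ) : lau (f * g) = lau f * lau g := map_mul _ f g
lemma lau_div (f g : RatFunc ℚ) : lau (f / g) = lau f / lau g := map_div₀ _ f g
lemma lau_inv (f : RatFunc ℚ) : lau f⁻¹ = (lau f)⁻¹ := map_inv₀ _ f
lemma lau_pow (f : RatFunc ℚ) (n : ℕ) : lau (f ^ n) = lau f ^ n := map_pow _ f n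
lemma lau_zero : lau 0 = 0 := map_zero _
lemma lau_sum (s : Finset ℕ) (f : ℕ → RatFunc ℚ) :
    lau (∑ i ∈ s, f i) = ∑ i ∈ s, lau (f i) := map_sum _ f s
lemma lau_prod (s : Finset ℕ) (f : ℕ → RatFunc ℚ) :
    lau (∏ i ∈ s, f i) = ∏ i ∈ s, lau (f i) := map_prod _ f s
lemma lau_X : lau RatFunc.X = qL := RatFunc.coe_X

/-- `1 + q + ⋯ + q^{n-1}` as an element of `ℤ[[q]]`. -/
def geomSeries (n : ℕ) : PowerSeries ℤ := ∑ i ∈ Finset.range n, PowerSeries.X ^ i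

lemma constantCoeff_geomSeries {n : ℕ} (hn : 0 < n) :
    PowerSeries.constantCoeff (geomSeries n) = 1 := by
  obtain ⟨m, rfl⟩ := Nat.exists_eq_succ_of_ne_zero hn.ne'
  simp [geomSeries, Finset.sum_range_succ']

lemma geomSeries_two_add (m : ℕ) :
    geomSeries (2 + m) = geomSeries 2 + PowerSeries.X ^ 2 * geomSeries m := by
  simp only [geomSeries, Finset.sum_range_add, Finset.mul_sum, pow_add]

lemma lau_qNum (n : ℕ) : lau (qNum n) = intSeries (geomSeries n) := by
  simp only [qNum, geomSeries, lau_sum, lau_pow, lau_X, map_sum, map_pow, intSeries_X]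

lemma lau_qNumInv (n : ℕ) :
    qL ^ n * lau (qNumInv (n + 1)) = intSeries (geomSeries (n + 1)) := by
  simp only [qNumInv, geomSeries, lau_sum, lau_pow, lau_X, lau_inv, map_sum, map_pow, intSeries_X]
  rw [Finset.mul_sum, ← Finset.sum_range_reflect]
  refine Finset.sum_congr rfl fun i hi => ?_
  have hi' : i ≤ n := Nat.lt_succ_iff.mp (Finset.mem_range.mp hi)
  obtain ⟨k, rfl⟩ := Nat.exists_eq_add_of_le hi'
  have hk : i + k + 1 - 1 - i = k := by omega
  rw [hk, pow_add, mul_assoc, ← mul_pow, mul_inv_cancel₀ qL_ne_zero, one_pow, mul_one]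

/-! ### Expansion of `q`-rationals -/

/-- The shape of the tails of a `q`-deformed continued fraction with positive entries. At an odd
position, a nonempty tail is a series in `1 + qℤ[[q]]`; at an even position, it is such a series
divided by `q^b`, where `b ≥ 1` unless the tail is just `[1]_{q⁻¹} = 1`. -/
lemma qCF_expansion (l : List ℕ) (hl : ∀ x ∈ l, 0 < x) :
    (l.length % 2 = 0 → l ≠ [] →
      ∃ u, PowerSeries.constantCoeff u = 1 ∧ lau (qCF true l) = intSeries u) ∧
    (l.length % 2 = 1 →
      ∃ (b : ℕ) (u : PowerSeries ℤ), PowerSeries.constantCoeff u = 1 ∧ (l ≠ [1] → 0 < b) ∧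
        qL ^ b * lau (qCF false l) = intSeries u) := by
  induction l with
  | nil => simp
  | cons a l ih =>
    have ha : 0 < a := hl a (by simp)
    obtain ⟨ihe, iho⟩ := ih fun x hx => hl x (by simp [hx])
    have hq := qL_ne_zero
    constructor
    · intro hlen _
      obtain ⟨b, u, hu, -, hbu⟩ := iho (by simp only [List.length_cons] at hlen; omega)
      obtain ⟨v, hv, huv⟩ := exists_intSeries_inv hu
      refine ⟨geomSeries a + PowerSeries.X ^ (a + b) * v, ?_, ?_⟩
      · simp [constantCoeff_geomSeries ha, ha.ne']
      · have h1 : lau (qCF false l) = intSeries u / qL ^ b := by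
          rw [← hbu]; field_simp
        simp only [qCF, lau_add, lau_div, lau_pow, lau_X, lau_qNum, map_add, map_mul, map_pow,
          intSeries_X, h1, ← huv]
        rw [div_div_eq_mul_div, div_eq_mul_inv, pow_add]
    · intro hlen
      obtain ⟨n, rfl⟩ := Nat.exists_eq_succ_of_ne_zero ha.ne'
      rcases eq_or_ne l [] with rfl | hne
      · refine ⟨n, geomSeries (n + 1), constantCoeff_geomSeries ha, ?_, ?_⟩
        · intro h
          refine Nat.pos_of_ne_zero fun h0 => h ?_
          simp [h0]
        · simp only [qCF, div_zero, add_zero]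
          exact lau_qNumInv n
      · obtain ⟨u, hu, hlu⟩ := ihe (by simp only [List.length_cons] at hlen; omega) hne
        obtain ⟨v, hv, huv⟩ := exists_intSeries_inv hu
        refine ⟨n + 1, PowerSeries.X * geomSeries (n + 1) + v, by simp [hv], fun _ => ha, ?_⟩
        simp only [Nat.succ_eq_add_one, qCF, lau_add, lau_div, lau_pow, lau_X, lau_inv, hlu, map_add,
          map_mul, intSeries_X, ← huv, ← lau_qNumInv]
        rw [mul_add, inv_pow, div_eq_mul_inv, mul_inv_cancel_left₀ (pow_ne_zero _ hq)]
        ring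

lemma cfNat_tail (q : ℕ) : ∀ p, 0 < q → q < p →
    ∃ (l : List ℕ) (x : ℕ), cfNat p q = l ++ [x + 2] ∧ ∀ y ∈ l, 0 < y := by
  induction q using Nat.strong_induction_on with
  | _ q ih =>
    intro p hq hqp
    rw [cfNat, dif_neg hq.ne']
    rcases Nat.eq_zero_or_pos (p % q) with h0 | h0
    · obtain ⟨c, rfl⟩ := Nat.dvd_of_mod_eq_zero h0
      have hc : 2 ≤ c := by
        by_contra hc
        have : q * c ≤ q * 1 := Nat.mul_le_mul_left q (by omega)
        omega
      refine ⟨[], c - 2, ?_, by simp⟩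
      rw [h0, cfNat, dif_pos rfl, Nat.mul_div_cancel_left _ hq, Nat.sub_add_cancel hc]
      rfl
    · obtain ⟨l, x, hl, hpos⟩ := ih _ (Nat.mod_lt p hq) q h0 (Nat.mod_lt p hq)
      refine ⟨p / q :: l, x, by rw [hl]; rfl, ?_⟩
      intro y hy
      rcases List.mem_cons.mp hy with rfl | hy
      · exact Nat.div_pos hqp.le hq
      · exact hpos y hy

lemma evenize_cfNat {p q : ℕ} (hq : 0 < q) (h : 0 < p % q) :
    ∃ l : List ℕ, evenize (cfNat p q) = (p / q) :: l ∧ (∀ y ∈ l, 0 < y) ∧ l.length % 2 = 1 ∧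
      l ≠ [1] := by
  obtain ⟨l, x, hl, hpos⟩ := cfNat_tail _ q h (Nat.mod_lt p hq)
  rw [cfNat, dif_neg hq.ne', hl, evenize]
  split_ifs with hlen
  · refine ⟨l ++ [x + 2], rfl, ?_, ?_, ?_⟩
    · intro y hy
      rcases List.mem_append.mp hy with hy | hy
      · exact hpos y hy
      · simp only [List.mem_singleton] at hy
        omega
    · simp only [List.length_cons, List.length_append, List.length_nil] at hlen ⊢
      omega
    · intro h1
      have := congrArg List.getLast? h1
      simp at this
  · have e : p / q :: (l ++ [x + 2]) = (p / q :: l) ++ [x + 2] := rfl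
    refine ⟨l ++ [x + 1, 1], ?_, ?_, ?_, ?_⟩
    · rw [e, List.dropLast_concat, List.getLast!_eq_getLast?_getD, List.getLast?_concat]
      rfl
    · intro y hy
      rcases List.mem_append.mp hy with hy | hy
      · exact hpos y hy
      · simp only [List.mem_cons, List.not_mem_nil, or_false] at hy
        omega
    · simp only [List.length_cons, List.length_append, List.length_nil] at hlen ⊢
      omega
    · intro h1
      have := congrArg List.length h1
      simp at this

/-- For a non-integer `α > 1` one has `[α]_q = [⌊α⌋]_q + q^{⌊α⌋+b}(1 + ⋯)` with `b ≥ 1`. -/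
lemma lau_qRatCF {α : ℚ} (h1 : 1 < α) (hα : ∀ z : ℤ, α ≠ z) {a : ℕ} (ha : ⌊α⌋ = a) :
    ∃ (b : ℕ) (v : PowerSeries ℤ), 0 < b ∧ PowerSeries.constantCoeff v = 1 ∧
      lau (qRatCF α) = intSeries (geomSeries a + PowerSeries.X ^ (a + b) * v) := by
  have hnum : 0 < α.num := Rat.num_pos.mpr (by linarith)
  have hcast : ((α.num.toNat : ℕ) : ℤ) = α.num := Int.toNat_of_nonneg hnum.le
  have hdiv : α.num.toNat / α.den = a := by
    have : ⌊α⌋ = α.num / α.den := Rat.floor_def α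
    zify
    rw [hcast, ← this, ha]
  have hmod : 0 < α.num.toNat % α.den := by
    refine Nat.pos_of_ne_zero fun h0 => hα α.num ?_
    have hd : α.den ∣ α.num.natAbs := by
      have : α.num.natAbs = α.num.toNat := by omega
      rw [this]
      exact Nat.dvd_of_mod_eq_zero h0
    have hden : α.den = 1 := Nat.eq_one_of_dvd_coprimes α.reduced hd dvd_rfl
    exact (Rat.den_eq_one_iff α).mp hden |>.symm
  obtain ⟨l, hl, hpos, hlen, hne⟩ := evenize_cfNat α.den_pos hmod
  obtain ⟨b, u, hu, hb, hbu⟩ := (qCF_expansion l hpos).2 hlen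
  obtain ⟨v, hv, huv⟩ := exists_intSeries_inv hu
  refine ⟨b, v, hb hne, hv, ?_⟩
  have hq := qL_ne_zero
  have h2 : lau (qCF false l) = intSeries u / qL ^ b := by
    rw [← hbu]; field_simp
  rw [qRatCF, hl, hdiv]
  simp only [qCF, lau_add, lau_div, lau_pow, lau_X, lau_qNum, map_add, map_mul, map_pow,
    intSeries_X, h2, ← huv]
  rw [div_div_eq_mul_div, div_eq_mul_inv, pow_add]

lemma lau_qRat_isIntUnit {α : ℚ} (hα : ∀ z : ℤ, α ≠ z) : IsIntUnit (lau (qRat α)) := by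
  by_cases h1 : 1 < α
  · have hf : 1 ≤ ⌊α⌋ := Int.le_floor.mpr (by exact_mod_cast h1.le)
    obtain ⟨b, v, hb, hv, h⟩ := lau_qRatCF h1 hα (a := ⌊α⌋.toNat) (by omega)
    rw [qRat, if_pos h1, h]
    refine isIntUnit_intSeries ?_
    have ha : 0 < ⌊α⌋.toNat := by omega
    simp [constantCoeff_geomSeries ha, hb.ne']
  · have hlt : α < 1 := lt_of_le_of_ne (not_lt.mp h1) (by exact_mod_cast hα 1)
    have hf : ⌊α⌋ < 1 := Int.floor_lt.mpr (by exact_mod_cast hlt)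
    obtain ⟨m, hm⟩ : ∃ m : ℕ, (2 - ⌊α⌋).toNat = 2 + m :=
      Nat.exists_eq_add_of_le (by omega)
    have hfl : ⌊α + ((2 + m : ℕ) : ℚ)⌋ = (2 : ℕ) := by
      rw [Int.floor_add_natCast]
      omega
    have hgt : 1 < α + ((2 + m : ℕ) : ℚ) := by
      have h2 := Int.floor_le (α + ((2 + m : ℕ) : ℚ))
      rw [hfl] at h2
      push_cast at h2 ⊢
      linarith
    have hni : ∀ z : ℤ, α + ((2 + m : ℕ) : ℚ) ≠ z := by
      intro z hz
      refine hα (z - (2 + m : ℕ)) ?_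
      push_cast at hz ⊢
      linarith
    obtain ⟨b, v, hb, hv, h⟩ := lau_qRatCF hgt hni hfl
    rw [qRat, if_neg h1, hm, lau_div, lau_sub, h, lau_pow, lau_X, lau_qNum, ← map_sub,
      geomSeries_two_add, div_eq_mul_inv]
    refine IsIntUnit.mul ?_ (isIntUnit_qL_pow _).inv
    -- the two copies of `[2]_q` cancel, leaving `q²(q^b(1 + ⋯) - [m]_q)`
    have e : geomSeries 2 + PowerSeries.X ^ (2 + b) * v
        - (geomSeries 2 + PowerSeries.X ^ 2 * geomSeries m)
        = PowerSeries.X ^ 2 * (PowerSeries.X ^ b * v - geomSeries m) := by ring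
    rw [e, map_mul, map_pow, intSeries_X]
    refine (isIntUnit_qL_pow _).mul ?_
    rcases Nat.eq_zero_or_pos m with rfl | hm0
    · have e0 : geomSeries 0 = 0 := by simp [geomSeries]
      rw [e0, sub_zero, map_mul, map_pow, intSeries_X]
      exact (isIntUnit_qL_pow _).mul (isIntUnit_intSeries hv)
    · rw [← neg_sub, map_neg]
      refine (isIntUnit_intSeries ?_).neg
      -- `b ≥ 1` ensures that the constant coefficient comes from `[m]_q` alone
      simp [constantCoeff_geomSeries hm0, hb.ne']

/-! ### The factors `S` and `T` -/

lemma gammaTerm_mem {β : ℚ} (hβ : ∀ z : ℤ, β ≠ z) (k : ℕ) : gammaTerm β k ∈ intLaurent := by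
  have h1 : IsIntUnit (lau (∏ i ∈ Finset.range k, qRat (β - 1 - i))) := by
    rw [lau_prod]
    refine IsIntUnit.prod fun i _ => lau_qRat_isIntUnit fun z hz => hβ (z + 1 + i) ?_
    push_cast
    linarith
  have h2 : IsIntUnit (lau (qFact k)) := by
    rw [qFact, lau_prod]
    refine IsIntUnit.prod fun i _ => ?_
    rw [lau_qNum]
    exact isIntUnit_intSeries (constantCoeff_geomSeries (Nat.succ_pos i))
  rw [gammaTerm, qBinom, lau_div, div_eq_mul_inv]
  exact Subring.mul_mem _ (Subring.mul_mem _
    (Subring.pow_mem _ (Subring.neg_mem _ (Subring.one_mem _)) _) (isIntUnit_qL_pow _).1)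
    (h1.mul h2.inv).1

lemma coeff_mem_of_isGammaSum {β : ℚ} (hβ : ∀ z : ℤ, β ≠ z) {S : LaurentSeries ℚ}
    (hS : IsGammaSum β S) : S ∈ intLaurent := by
  intro m
  obtain ⟨K, hK⟩ := hS m
  rw [← hK K le_rfl]
  exact Subring.sum_mem intLaurent (fun k _ => gammaTerm_mem hβ k) m

lemma descPochhammer_smeval_neg_eq_prod (r : ℚ) (n : ℕ) :
    (descPochhammer ℤ n).smeval (-r) = (-1) ^ n * ∏ i ∈ Finset.range n, (r + i) := by
  induction n with
  | zero => simp
  | succ n ih =>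
    rw [descPochhammer_succ_right, Polynomial.smeval_mul, ih, Finset.prod_range_succ,
      Polynomial.smeval_sub, Polynomial.smeval_X, Polynomial.smeval_natCast]
    simp only [pow_one, pow_zero, nsmul_eq_mul, mul_one]
    ring

/-- `T_β` is the binomial series `(1 + q)^{-(β-1)}` with `q` replaced by `-q`. -/
lemma Tser_eq (β : ℚ) :
    Tser β = HahnSeries.ofPowerSeries ℤ ℚ
      (PowerSeries.rescale (-1) (PowerSeries.binomialSeries ℚ (-(β - 1)))) := by
  rw [Tser]
  congr 1
  ext n
  rw [PowerSeries.coeff_mk, PowerSeries.coeff_rescale, PowerSeries.binomialSeries_coeff,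
    Ring.choose_eq_smul, descPochhammer_smeval_neg_eq_prod, genBinom]
  have h : ((-1 : ℚ) ^ n) * (-1) ^ n = 1 := by rw [← mul_pow]; simp
  simp only [smul_eq_mul, mul_one]
  rw [mul_left_comm, ← mul_assoc ((-1 : ℚ) ^ n), h, one_mul, div_eq_inv_mul]

lemma Tser_mul_Tser_mem {β γ : ℚ} {N : ℤ} (h : β + γ = N) :
    Tser β * Tser γ ∈ intLaurent := by
  rw [Tser_eq, Tser_eq, ← map_mul, ← map_mul, ← PowerSeries.binomialSeries_add]
  refine ofPowerSeries_mem fun n => ?_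
  have e : -(β - 1) + -(γ - 1) = Int.castRingHom ℚ (2 - N) := by
    rw [eq_intCast]
    push_cast
    linarith
  rw [PowerSeries.coeff_rescale, PowerSeries.binomialSeries_coeff, e, ← Ring.map_choose,
    smul_eq_mul, mul_one]
  exact Subring.mul_mem _ (Subring.pow_mem _ (Subring.neg_mem _ (Subring.one_mem _)) _) ⟨_, rfl⟩

/-- The `q`-reflection formula: for non-integer rational `α`, every coefficient
of `Γ_q(α)·Γ_q(1-α) ∈ ℚ((q))` is an integer.  Here `Γ_q(β) = S_β·T_β` for
`β ≥ 1`, and `Γ_q` is extended below `1` by `Γ_q(β) = Γ_q(β+n)/([β]_q⋯[β+n-1]_q)`;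
the natural number `n = (1-⌊β⌋)⁺` is chosen so that `β + n ≥ 1`. -/
theorem qGamma_reflection (α : ℚ) (hα : ∀ z : ℤ, α ≠ z) (S₁ S₂ : LaurentSeries ℚ)
    (hS₁ : IsGammaSum (α + ((1 - ⌊α⌋).toNat : ℕ)) S₁)
    (hS₂ : IsGammaSum ((1 - α) + ((1 - ⌊(1 : ℚ) - α⌋).toNat : ℕ)) S₂) :
    ∀ m : ℤ, ∃ z : ℤ,
      (((S₁ * Tser (α + ((1 - ⌊α⌋).toNat : ℕ)))
          / ∏ j ∈ Finset.range (1 - ⌊α⌋).toNat, lau (qRat (α + j))) *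
       ((S₂ * Tser ((1 - α) + ((1 - ⌊(1 : ℚ) - α⌋).toNat : ℕ)))
          / ∏ j ∈ Finset.range (1 - ⌊(1 : ℚ) - α⌋).toNat, lau (qRat ((1 - α) + j)))).coeff m
        = (z : ℚ) := by
  have hα' : ∀ z : ℤ, 1 - α ≠ z := by
    intro z hz
    refine hα (1 - z) ?_
    push_cast
    linarith
  have shift : ∀ {β : ℚ}, (∀ z : ℤ, β ≠ z) → ∀ (n : ℕ) (z : ℤ), β + n ≠ z := by
    intro β hβ n z hz
    refine hβ (z - n) ?_
    push_cast
    linarith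
  have hS₁' := coeff_mem_of_isGammaSum (shift hα _) hS₁
  have hS₂' := coeff_mem_of_isGammaSum (shift hα' _) hS₂
  have hP₁ := (IsIntUnit.prod (s := Finset.range (1 - ⌊α⌋).toNat)
    fun j _ => lau_qRat_isIntUnit (shift hα j)).2
  have hP₂ := (IsIntUnit.prod (s := Finset.range (1 - ⌊(1 : ℚ) - α⌋).toNat)
    fun j _ => lau_qRat_isIntUnit (shift hα' j)).2
  have hT : Tser (α + ((1 - ⌊α⌋).toNat : ℕ)) *
      Tser ((1 - α) + ((1 - ⌊(1 : ℚ) - α⌋).toNat : ℕ)) ∈ intLaurent := by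
    refine Tser_mul_Tser_mem
      (N := 1 + ((1 - ⌊α⌋).toNat : ℕ) + ((1 - ⌊(1 : ℚ) - α⌋).toNat : ℕ)) ?_
    rw [Int.cast_add, Int.cast_add, Int.cast_natCast, Int.cast_natCast, Int.cast_one]
    ring
  have key := Subring.mul_mem _ (Subring.mul_mem _ (Subring.mul_mem _ hS₁' hS₂') hT)
    (Subring.mul_mem _ hP₁ hP₂)
  intro m
  obtain ⟨z, hz⟩ := key m
  refine ⟨z, ?_⟩
  rw [eq_intCast] at hz
  rw [hz, div_eq_mul_inv, div_eq_mul_inv]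
  refine congrArg (fun f : LaurentSeries ℚ => f.coeff m) ?_
  generalize Tser (α + ((1 - ⌊α⌋).toNat : ℕ)) = T₁
  generalize Tser ((1 - α) + ((1 - ⌊(1 : ℚ) - α⌋).toNat : ℕ)) = T₂
  generalize (∏ j ∈ Finset.range (1 - ⌊α⌋).toNat, lau (qRat (α + j)))⁻¹ = P₁
  generalize (∏ j ∈ Finset.range (1 - ⌊(1 : ℚ) - α⌋).toNat, lau (qRat ((1 - α) + j)))⁻¹ = P₂
  ring

end
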